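/- arXiv:1612.05393 — 4 statements merged into one kernel-verified Lean document; each statement's English description precedes it below -/
import Mathlib

section
/- Faà di Bruno's formula: Let f, g : ℝ → ℝ be n-times continuously differentiable functions, and let x ∈ ℝ. Then the n-th derivative of the composition f ∘ g at x equals the sum, over all tuples (m₁, …, mₙ) of non-negative integers satisfying m₁ + 2·m₂ + ⋯ + n·mₙ = n, of the terms n! / (m₁! · m₂! ⋯ mₙ!) · f^{(p)}(g(x)) · ∏_{j=1}^{n} ( g^{(j)}(x) / j! )^{m_j}, where p = m₁ + m₂ + ⋯ + mₙ. -/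
open Finset

/-- The weight of a tuple. -/
def fdbW {n : ℕ} (m : Fin n → ℕ) : ℕ := ∑ j : Fin n, (j.1 + 1) * m j

/-- The box of tuples. -/
def fdbBox (n : ℕ) : Finset (Fin n → ℕ) := Fintype.piFinset fun _ : Fin n => Finset.range (n + 1)

/-- Divided power monomial. -/
noncomputable def fdbP {n : ℕ} (a : ℕ → ℝ) (m : Fin n → ℕ) : ℝ :=
  ∏ j : Fin n, a (j.1 + 1) ^ m j / ((m j).factorial : ℝ)

lemma fdb_le_w {n : ℕ} (m : Fin n → ℕ) (j : Fin n) : (j.1 + 1) * m j ≤ fdbW m :=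
  Finset.single_le_sum (f := fun j : Fin n => (j.1 + 1) * m j) (fun _ _ => Nat.zero_le _)
    (Finset.mem_univ j)

lemma fdb_mem_box {n : ℕ} (m : Fin n → ℕ) (h : fdbW m ≤ n) : m ∈ fdbBox n := by
  unfold fdbBox
  rw [Fintype.mem_piFinset]
  intro j
  rw [Finset.mem_range]
  have := fdb_le_w m j
  nlinarith [Nat.zero_le (j.1 * m j)]

lemma fdb_sum_update {n : ℕ} (c : Fin n → ℕ) (m : Fin n → ℕ) (j : Fin n) (v : ℕ) :
    ∑ i, c i * Function.update m j v i + c j * m j = ∑ i, c i * m i + c j * v := by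
  rw [← Finset.add_sum_erase _ _ (Finset.mem_univ j),
    ← Finset.add_sum_erase _ (fun i => c i * m i) (Finset.mem_univ j)]
  have : ∑ i ∈ univ.erase j, c i * Function.update m j v i = ∑ i ∈ univ.erase j, c i * m i := by
    refine Finset.sum_congr rfl fun i hi => ?_
    rw [Function.update_of_ne (Finset.ne_of_mem_erase hi)]
  rw [this]
  simp
  ring

lemma fdb_w_update {n : ℕ} (m : Fin n → ℕ) (j : Fin n) (v : ℕ) :
    fdbW (Function.update m j v) + (j.1 + 1) * m j = fdbW m + (j.1 + 1) * v :=
  fdb_sum_update (fun j => j.1 + 1) m j v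

lemma fdb_s_update {n : ℕ} (m : Fin n → ℕ) (j : Fin n) (v : ℕ) :
    ∑ i, Function.update m j v i + m j = ∑ i, m i + v := by
  simpa using fdb_sum_update (fun _ => 1) m j v

lemma fdb_shift {n k : ℕ} (hk : k ≤ n) (j : Fin n) (H : (Fin n → ℕ) → ℝ) :
    ∑ m ∈ (fdbBox n).filter (fun m => fdbW m = k),
      (if m j = 0 then 0 else H (Function.update m j (m j - 1))) =
    ∑ r ∈ (fdbBox n).filter (fun r => fdbW r + (j.1 + 1) = k), H r := by
  have e : ∀ m : Fin n → ℕ, (if m j = 0 then 0 else H (Function.update m j (m j - 1))) =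
      (if ¬ m j = 0 then H (Function.update m j (m j - 1)) else 0) := by
    intro m; split_ifs <;> rfl
  simp_rw [e]
  rw [← Finset.sum_filter]
  refine Finset.sum_bij' (fun m _ => Function.update m j (m j - 1))
    (fun r _ => Function.update r j (r j + 1)) ?_ ?_ ?_ ?_ ?_
  · intro m hm
    simp only [Finset.mem_filter] at hm
    obtain ⟨⟨_, h1⟩, h2⟩ := hm
    have := fdb_w_update m j (m j - 1)
    obtain ⟨t, ht⟩ := Nat.exists_eq_succ_of_ne_zero h2
    rw [ht] at this ⊢
    simp only [Nat.succ_eq_add_one, Nat.add_sub_cancel] at this ⊢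
    have h3 : fdbW (Function.update m j t) + (j.1 + 1) = k := by linarith
    exact Finset.mem_filter.2 ⟨fdb_mem_box _ (by omega), h3⟩
  · intro r hr
    simp only [Finset.mem_filter] at hr
    have := fdb_w_update r j (r j + 1)
    have h3 : fdbW (Function.update r j (r j + 1)) = k := by linarith [hr.2]
    simp only [Finset.mem_filter]
    exact ⟨⟨fdb_mem_box _ (by omega), h3⟩, by simp⟩
  · intro m hm
    simp only [Finset.mem_filter] at hm
    have : m j - 1 + 1 = m j := by omega
    simp [this]
  · intro r hr
    simp
  · intro m hm
    rfl

lemma fdb_P_erase {n : ℕ} (a : ℕ → ℝ) (m : Fin n → ℕ) (j : Fin n) (v : ℕ) :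
    (∏ i ∈ univ.erase j, a (i.1 + 1) ^ m i / ((m i).factorial : ℝ)) *
      (a (j.1 + 1) ^ v / (v.factorial : ℝ)) = fdbP a (Function.update m j v) := by
  unfold fdbP
  rw [← Finset.prod_erase_mul _ _ (Finset.mem_univ j)]
  congr 1
  · refine Finset.prod_congr rfl fun i hi => ?_
    rw [Function.update_of_ne (Finset.ne_of_mem_erase hi)]
  · simp

lemma fdb_mul_P {n : ℕ} (a : ℕ → ℝ) (m : Fin n → ℕ) (j : Fin n) :
    (m j : ℝ) * fdbP a m =
      if m j = 0 then 0 else a (j.1 + 1) * fdbP a (Function.update m j (m j - 1)) := by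
  split_ifs with h
  · simp [h]
  · obtain ⟨t, ht⟩ := Nat.exists_eq_succ_of_ne_zero h
    have h1 := fdb_P_erase a m j (m j)
    have h2 := fdb_P_erase a m j (m j - 1)
    rw [Function.update_eq_self] at h1
    rw [← h1, ← h2, ht]
    simp only [Nat.succ_eq_add_one, Nat.add_sub_cancel, Nat.factorial_succ]
    push_cast
    have : (t.factorial : ℝ) ≠ 0 := by positivity
    have : (t : ℝ) + 1 ≠ 0 := by positivity
    field_simp
    ring

lemma fdb_alg {n k : ℕ} (hk : k < n) (a F : ℕ → ℝ) :
    ∑ m ∈ (fdbBox n).filter (fun m => fdbW m = k),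
      (F (∑ i, m i + 1) * a 1 * fdbP a m + F (∑ i, m i) *
        ∑ j : Fin n, (if m j = 0 then 0 else
          fdbP a (Function.update m j (m j - 1)) * ((j.1 + 2 : ℝ) * a (j.1 + 2)))) =
    (k + 1 : ℝ) * ∑ m ∈ (fdbBox n).filter (fun m => fdbW m = k + 1),
      F (∑ i, m i) * fdbP a m := by
  set U : ℕ → ℝ := fun i => ∑ r ∈ (fdbBox n).filter (fun r => fdbW r + i = k),
    F (∑ i, r i + 1) * fdbP a r with hU
  have hs : ∀ (m : Fin n → ℕ) (j : Fin n), m j ≠ 0 →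
      ∑ i, Function.update m j (m j - 1) i + 1 = ∑ i, m i := by
    intro m j h
    have := fdb_s_update m j (m j - 1)
    omega
  have hUn : U n = 0 := by
    rw [hU]
    refine Finset.sum_eq_zero fun r hr => ?_
    have := (Finset.mem_filter.1 hr).2
    omega
  have L : ∑ m ∈ (fdbBox n).filter (fun m => fdbW m = k),
      (F (∑ i, m i + 1) * a 1 * fdbP a m + F (∑ i, m i) *
        ∑ j : Fin n, (if m j = 0 then 0 else
          fdbP a (Function.update m j (m j - 1)) * ((j.1 + 2 : ℝ) * a (j.1 + 2)))) =
      a 1 * U 0 + ∑ j : Fin n, (j.1 + 2 : ℝ) * a (j.1 + 2) * U (j.1 + 1) := by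
    rw [Finset.sum_add_distrib]
    congr 1
    · simp only [hU, Finset.mul_sum, add_zero]
      exact Finset.sum_congr rfl fun m _ => by ring
    · simp_rw [Finset.mul_sum]
      rw [Finset.sum_comm]
      refine Finset.sum_congr rfl fun j _ => ?_
      rw [hU, Finset.mul_sum, ← fdb_shift hk.le j (fun r =>
        (j.1 + 2 : ℝ) * a (j.1 + 2) * (F (∑ i, r i + 1) * fdbP a r))]
      refine Finset.sum_congr rfl fun m _ => ?_
      split_ifs with h
      · simp
      · rw [hs m j h]; ring
  have R : (k + 1 : ℝ) * ∑ m ∈ (fdbBox n).filter (fun m => fdbW m = k + 1),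
      F (∑ i, m i) * fdbP a m = ∑ j : Fin n, (j.1 + 1 : ℝ) * a (j.1 + 1) * U j.1 := by
    have e1 : ∀ m ∈ (fdbBox n).filter (fun m => fdbW m = k + 1),
        (k + 1 : ℝ) * (F (∑ i, m i) * fdbP a m) = ∑ j : Fin n,
          (if m j = 0 then 0 else (j.1 + 1 : ℝ) * a (j.1 + 1) *
            (F (∑ i, Function.update m j (m j - 1) i + 1) *
              fdbP a (Function.update m j (m j - 1)))) := by
      intro m hm
      have hw : (k + 1 : ℝ) = ∑ j : Fin n, (j.1 + 1 : ℝ) * m j := by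
        have := (Finset.mem_filter.1 hm).2
        unfold fdbW at this
        exact_mod_cast this.symm
      rw [hw, Finset.sum_mul]
      refine Finset.sum_congr rfl fun j _ => ?_
      have := fdb_mul_P a m j
      calc _ = (j.1 + 1 : ℝ) * F (∑ i, m i) * (m j * fdbP a m) := by ring
        _ = _ := by
          rw [this]
          split_ifs with h
          · simp
          · rw [hs m j h]; ring
    rw [Finset.mul_sum, Finset.sum_congr rfl e1, Finset.sum_comm]
    refine Finset.sum_congr rfl fun j _ => ?_
    rw [fdb_shift (by omega : k + 1 ≤ n) j (fun r =>
        (j.1 + 1 : ℝ) * a (j.1 + 1) * (F (∑ i, r i + 1) * fdbP a r)), hU, Finset.mul_sum]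
    refine Finset.sum_congr ?_ fun _ _ => rfl
    refine Finset.filter_congr fun r _ => ?_
    omega
  rw [L, R, Fin.sum_univ_eq_sum_range (fun j => (j + 2 : ℝ) * a (j + 2) * U (j + 1)),
    Fin.sum_univ_eq_sum_range (fun j => (j + 1 : ℝ) * a (j + 1) * U j)]
  have h1 := Finset.sum_range_succ (fun j : ℕ => (j + 1 : ℝ) * a (j + 1) * U j) n
  have h2 := Finset.sum_range_succ' (fun j : ℕ => (j + 1 : ℝ) * a (j + 1) * U j) n
  rw [hUn] at h1
  have h3 : ∀ j : ℕ, ((j + 1 : ℕ) + 1 : ℝ) = (j : ℝ) + 2 := by intro j; push_cast; ring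
  simp only [h3] at h2
  simp only [add_assoc, Nat.cast_zero, zero_add, one_mul, mul_zero, add_zero] at h1 h2 ⊢
  norm_num at h2
  linarith

lemma fdb_hasDeriv_iter {n i : ℕ} {g : ℝ → ℝ} (hg : ContDiff ℝ n g) (hi : i < n) (x : ℝ) :
    HasDerivAt (iteratedDeriv i g) (iteratedDeriv (i + 1) g x) x := by
  rw [iteratedDeriv_succ]
  exact ((hg.differentiable_iteratedDeriv i (by exact_mod_cast hi)) x).hasDerivAt

lemma fdb_hasDeriv_a {n i : ℕ} {g : ℝ → ℝ} (hg : ContDiff ℝ n g) (hi : i < n) (x : ℝ) :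
    HasDerivAt (fun y => iteratedDeriv i g y / (i.factorial : ℝ))
      ((i + 1 : ℝ) * (iteratedDeriv (i + 1) g x / ((i + 1).factorial : ℝ))) x := by
  refine ((fdb_hasDeriv_iter hg hi x).div_const (i.factorial : ℝ)).congr_deriv ?_
  rw [Nat.factorial_succ]
  push_cast
  have : (i.factorial : ℝ) ≠ 0 := by positivity
  have : (i : ℝ) + 1 ≠ 0 := by positivity
  field_simp

lemma fdb_hasDeriv_P {n : ℕ} {g : ℝ → ℝ} (hg : ContDiff ℝ n g) (x : ℝ) (m : Fin n → ℕ)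
    (hm : fdbW m < n) (a : ℝ → ℕ → ℝ)
    (ha : a = fun y i => iteratedDeriv i g y / (i.factorial : ℝ)) :
    HasDerivAt (fun y => fdbP (a y) m) (∑ j : Fin n, (if m j = 0 then 0 else
          fdbP (a x) (Function.update m j (m j - 1)) * ((j.1 + 2 : ℝ) * a x (j.1 + 2)))) x := by
  have hd : ∀ j ∈ (univ : Finset (Fin n)), HasDerivAt
      (fun y => a y (j.1 + 1) ^ m j / ((m j).factorial : ℝ))
      (if m j = 0 then 0 else (a x (j.1 + 1) ^ (m j - 1) / ((m j - 1).factorial : ℝ)) *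
        ((j.1 + 2 : ℝ) * a x (j.1 + 2))) x := by
    intro j _
    split_ifs with h
    · simp only [h, pow_zero]
      exact hasDerivAt_const _ _
    · have hj : j.1 + 1 < n := by
        have := fdb_le_w m j
        have : 1 ≤ m j := by omega
        nlinarith
      obtain ⟨t, ht⟩ := Nat.exists_eq_succ_of_ne_zero h
      have h1 := fdb_hasDeriv_a hg hj x
      have h2 := (h1.pow (m j)).div_const ((m j).factorial : ℝ)
      subst ha
      refine h2.congr_deriv ?_
      rw [ht]
      simp only [Nat.succ_eq_add_one, Nat.add_sub_cancel, Nat.factorial_succ t]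
      push_cast
      have : (t.factorial : ℝ) ≠ 0 := by positivity
      have : (t : ℝ) + 1 ≠ 0 := by positivity
      field_simp
      ring
  have := HasDerivAt.fun_finsetProd hd
  unfold fdbP at *
  refine this.congr_deriv ?_
  refine Finset.sum_congr rfl fun j _ => ?_
  split_ifs with h
  · simp
  · have := fdb_P_erase (a x) m j (m j - 1)
    unfold fdbP at this
    rw [← this, smul_eq_mul]
    ring

lemma fdb_main (n : ℕ) (f g : ℝ → ℝ) (hf : ContDiff ℝ n f) (hg : ContDiff ℝ n g)
    (a : ℝ → ℕ → ℝ) (ha : a = fun y i => iteratedDeriv i g y / (i.factorial : ℝ)) (k : ℕ) :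
    k ≤ n → iteratedDeriv k (f ∘ g) = fun x => (k.factorial : ℝ) *
      ∑ m ∈ (fdbBox n).filter (fun m => fdbW m = k),
        iteratedDeriv (∑ i, m i) f (g x) * fdbP (a x) m := by
  induction k with
  | zero =>
    intro _
    have : (fdbBox n).filter (fun m => fdbW m = 0) = {0} := by
      ext m
      simp only [Finset.mem_filter, Finset.mem_singleton]
      constructor
      · rintro ⟨_, h⟩
        ext j
        have := fdb_le_w m j
        rw [h] at this
        simpa using this
      · rintro rfl
        have : fdbW (0 : Fin n → ℕ) = 0 := by simp [fdbW]
        exact ⟨fdb_mem_box _ (by omega), this⟩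
    rw [this]
    ext x
    simp [fdbP]
  | succ k ih =>
    intro hk
    rw [iteratedDeriv_succ, ih (by omega)]
    ext x
    have hd : ∀ m ∈ (fdbBox n).filter (fun m => fdbW m = k),
        HasDerivAt (fun x => iteratedDeriv (∑ i, m i) f (g x) * fdbP (a x) m)
        (iteratedDeriv (∑ i, m i + 1) f (g x) * a x 1 * fdbP (a x) m +
          iteratedDeriv (∑ i, m i) f (g x) * ∑ j : Fin n, (if m j = 0 then 0 else
          fdbP (a x) (Function.update m j (m j - 1)) * ((j.1 + 2 : ℝ) * a x (j.1 + 2)))) x := by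
      intro m hm
      have hw := (Finset.mem_filter.1 hm).2
      have hs : ∑ i, m i ≤ fdbW m :=
        Finset.sum_le_sum fun i _ => Nat.le_mul_of_pos_left _ (Nat.succ_pos _)
      have h1 := fdb_hasDeriv_iter hf (by omega : ∑ i, m i < n) (g x)
      have h2 := fdb_hasDeriv_iter hg (by omega : 0 < n) x
      rw [iteratedDeriv_zero] at h2
      have h3 := (h1.comp x h2).mul (fdb_hasDeriv_P hg x m (by omega) a ha)
      refine h3.congr_deriv ?_
      simp [ha]
    rw [((HasDerivAt.fun_sum hd).const_mul (k.factorial : ℝ)).deriv,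
      fdb_alg (by omega) (a x) (fun p => iteratedDeriv p f (g x)), Nat.factorial_succ]
    push_cast
    ring


/-- **Faà di Bruno's formula.** For `n`-times continuously differentiable
`f g : ℝ → ℝ`, the `n`-th derivative of `f ∘ g` at `x` is the sum over all
tuples `(m₁, …, mₙ)` of nonnegative integers with `∑ j·m_j = n` of
`n! / (m₁!⋯mₙ!) · f^{(p)}(g x) · ∏ (g^{(j)}(x)/j!)^{m_j}` where `p = ∑ m_j`. -/
theorem faa_di_bruno (n : ℕ) (f g : ℝ → ℝ)
    (hf : ContDiff ℝ n f) (hg : ContDiff ℝ n g) (x : ℝ) :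
    iteratedDeriv n (f ∘ g) x =
      ∑ m ∈ (Fintype.piFinset fun _ : Fin n => Finset.range (n + 1)).filter
          (fun m : Fin n → ℕ => ∑ j : Fin n, (j.1 + 1) * m j = n),
        (n.factorial : ℝ) / (∏ j : Fin n, ((m j).factorial : ℝ)) *
          iteratedDeriv (∑ j : Fin n, m j) f (g x) *
          ∏ j : Fin n,
            (iteratedDeriv (j.1 + 1) g x / ((j.1 + 1).factorial : ℝ)) ^ m j := by
  rw [fdb_main n f g hf hg _ rfl n le_rfl]
  simp only [Finset.mul_sum]
  refine Finset.sum_congr rfl fun m _ => ?_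
  unfold fdbP
  rw [Finset.prod_div_distrib]
  ring
end

section
/- Faà di Bruno's formula for powers (Lagrange series case): Let g : ℝ → ℝ be n-times continuously differentiable, let m ∈ ℕ, and let y ∈ ℝ. Then (1/n!) times the n-th derivative at y of the function x ↦ (g(x))^m equals the sum, over all tuples (m₁, …, mₙ) of non-negative integers satisfying m₁ + 2·m₂ + ⋯ + n·mₙ = n, of m·(m−1)⋯(m−p+1) / (m₁! · m₂! ⋯ mₙ!) · (g(y))^{m−p} · ∏_{j=1}^{n} ( g^{(j)}(y) / j! )^{m_j}, where p = m₁ + ⋯ + mₙ and m·(m−1)⋯(m−p+1) denotes the descending factorial (which is 0 when p > m, in which case the exponent m−p is interpreted via natural subtraction and the term vanishes). -/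
open Finset

lemma fdb_coeff (n : ℕ) (g : ℝ → ℝ) (hg : ContDiff ℝ n g) (y : ℝ) (P : Polynomial ℝ)
    (hP : ∀ k ≤ n, P.coeff k = iteratedDeriv k g y / (k.factorial : ℝ)) (m : ℕ) :
    ∀ k ≤ n, (P ^ m).coeff k = iteratedDeriv k (fun x => (g x) ^ m) y / (k.factorial : ℝ) := by
  induction m with
  | zero =>
    intro k hk
    rcases k with _ | k
    · simp
    · simp [iteratedDeriv_const, Polynomial.coeff_one]
  | succ m ih =>
    intro k hk
    have hgk : ContDiffAt ℝ k g y := (hg.of_le (by exact_mod_cast hk)).contDiffAt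
    have h := iteratedDeriv_fun_mul (n := k) (x := y) (hgk.pow m) hgk
    simp only [pow_succ]
    rw [Polynomial.coeff_mul, h, Finset.Nat.sum_antidiagonal_eq_sum_range_succ_mk, Finset.sum_div]
    refine Finset.sum_congr rfl fun i hi => ?_
    have hi' : i ≤ k := by simpa [Nat.lt_succ_iff] using hi
    rw [ih i (hi'.trans hk), hP (k - i) ((Nat.sub_le _ _).trans hk)]
    have hc : ((k.choose i : ℕ) : ℝ) = k.factorial / (i.factorial * (k - i).factorial) :=
      Nat.cast_choose ℝ hi'
    rw [hc]
    have h1 : (k.factorial : ℝ) ≠ 0 := by positivity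
    have h2 : (i.factorial : ℝ) ≠ 0 := by positivity
    have h3 : ((k - i).factorial : ℝ) ≠ 0 := by positivity
    field_simp

lemma fdb_poly (n m : ℕ) (a : ℝ) (b : Fin n → ℝ) :
    ((Polynomial.C a + ∑ j : Fin n, Polynomial.C (b j) * Polynomial.X ^ (j.1 + 1)) ^ m).coeff n =
      ∑ c ∈ (Fintype.piFinset fun _ : Fin n => Finset.range (n + 1)).filter
          (fun c : Fin n → ℕ => ∑ j : Fin n, (j.1 + 1) * c j = n),
        (m.descFactorial (∑ j : Fin n, c j) : ℝ) /
            (∏ j : Fin n, ((c j).factorial : ℝ)) *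
          a ^ (m - ∑ j : Fin n, c j) * ∏ j : Fin n, b j ^ c j := by
  set T : (Fin n → ℕ) → ℝ := fun c => (m.descFactorial (∑ j : Fin n, c j) : ℝ) /
            (∏ j : Fin n, ((c j).factorial : ℝ)) *
          a ^ (m - ∑ j : Fin n, c j) * ∏ j : Fin n, b j ^ c j with hT
  set S := (Fintype.piFinset fun _ : Fin n => Finset.range (n + 1)).filter
          (fun c : Fin n → ℕ => ∑ j : Fin n, (j.1 + 1) * c j = n) with hS
  have hmemS : ∀ c : Fin n → ℕ, c ∈ S ↔ ∑ j : Fin n, (j.1 + 1) * c j = n := by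
    intro c
    simp only [hS, Finset.mem_filter, Fintype.mem_piFinset, Finset.mem_range,
      and_iff_right_iff_imp]
    intro h j
    have h1 := Finset.single_le_sum (f := fun j : Fin n => (j.1 + 1) * c j)
      (fun _ _ => Nat.zero_le _) (Finset.mem_univ j)
    simp only [h] at h1
    nlinarith [Nat.zero_le (j.1 * c j)]
  have key : ∀ p ∈ Finset.range (m + 1),
      ((∑ j : Fin n, Polynomial.C (b j) * Polynomial.X ^ (j.1 + 1)) ^ p * Polynomial.C a ^ (m - p)
        * (m.choose p : Polynomial ℝ)).coeff n = ∑ c ∈ S, if ∑ j, c j = p then T c else 0 := by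
    intro p hp
    have hpm : p ≤ m := by simpa [Nat.lt_succ_iff] using hp
    rw [Finset.sum_pow_eq_sum_piAntidiag, Finset.sum_mul, Finset.sum_mul,
      Polynomial.finset_sum_coeff]
    have : ∀ c ∈ Finset.piAntidiag (Finset.univ : Finset (Fin n)) p,
        (((Nat.multinomial Finset.univ c : ℕ) : Polynomial ℝ) *
          (∏ j : Fin n, (Polynomial.C (b j) * Polynomial.X ^ (j.1 + 1)) ^ c j) *
          Polynomial.C a ^ (m - p) * (m.choose p : Polynomial ℝ)).coeff n
        = if ∑ j : Fin n, (j.1 + 1) * c j = n then T c else 0 := by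
      intro c hc
      have hcp : ∑ j, c j = p := by simpa using hc
      have e : (((Nat.multinomial Finset.univ c : ℕ) : Polynomial ℝ) *
          (∏ j : Fin n, (Polynomial.C (b j) * Polynomial.X ^ (j.1 + 1)) ^ c j) *
          Polynomial.C a ^ (m - p) * (m.choose p : Polynomial ℝ)) =
          Polynomial.C ((Nat.multinomial Finset.univ c : ℝ) * (∏ j, b j ^ c j) * a ^ (m - p)
            * m.choose p) * Polynomial.X ^ (∑ j : Fin n, (j.1 + 1) * c j) := by
        simp only [mul_pow, Finset.prod_mul_distrib, ← pow_mul, Finset.prod_pow_eq_pow_sum,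
          map_mul, map_prod, map_pow, map_natCast]
        ring
      rw [e, Polynomial.coeff_C_mul_X_pow]
      simp only [eq_comm (a := n)]
      split_ifs with h
      · have hms := Nat.multinomial_spec Finset.univ c
        rw [hcp] at hms
        have hms' : (∏ j, ((c j).factorial : ℝ)) * (Nat.multinomial Finset.univ c : ℝ)
          = p.factorial := by exact_mod_cast hms
        have hd : (m.descFactorial p : ℝ) = p.factorial * m.choose p := by
          exact_mod_cast Nat.descFactorial_eq_factorial_mul_choose m p
        have h0 : (∏ j, ((c j).factorial : ℝ)) ≠ 0 :=
          Finset.prod_ne_zero_iff.mpr fun j _ => by positivity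
        simp only [hT, hcp]
        rw [hd, ← hms']
        field_simp
      · rfl
    rw [Finset.sum_congr rfl this, ← Finset.sum_filter, ← Finset.sum_filter]
    refine Finset.sum_congr ?_ fun _ _ => rfl
    ext c
    simp [hmemS, and_comm]
  rw [add_comm, add_pow, Polynomial.finset_sum_coeff, Finset.sum_congr rfl key, Finset.sum_comm]
  refine Finset.sum_congr rfl fun c _ => ?_
  rw [Finset.sum_ite_eq]
  split_ifs with h
  · rfl
  · have : m < ∑ j, c j := by simpa using h
    simp [hT, Nat.descFactorial_of_lt this]

/-- **Faà di Bruno's formula for powers** (the Lagrange-series case):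
`(1/n!) Dⁿ (g y)^m` equals the sum over tuples `(m₁, …, mₙ)` with
`∑ j·m_j = n` of `m(m-1)⋯(m-p+1)/(m₁!⋯mₙ!) · (g y)^{m-p} · ∏ (g^{(j)}(y)/j!)^{m_j}`,
where `p = ∑ m_j` and the descending factorial is `Nat.descFactorial`. -/
theorem faa_di_bruno_pow (n : ℕ) (g : ℝ → ℝ) (hg : ContDiff ℝ n g)
    (m : ℕ) (y : ℝ) :
    (1 / (n.factorial : ℝ)) * iteratedDeriv n (fun x => (g x) ^ m) y =
      ∑ c ∈ (Fintype.piFinset fun _ : Fin n => Finset.range (n + 1)).filter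
          (fun c : Fin n → ℕ => ∑ j : Fin n, (j.1 + 1) * c j = n),
        (m.descFactorial (∑ j : Fin n, c j) : ℝ) /
            (∏ j : Fin n, ((c j).factorial : ℝ)) *
          (g y) ^ (m - ∑ j : Fin n, c j) *
          ∏ j : Fin n,
            (iteratedDeriv (j.1 + 1) g y / ((j.1 + 1).factorial : ℝ)) ^ c j := by
  rw [← fdb_poly n m (g y)
    (fun j => iteratedDeriv (j.1 + 1) g y / ((j.1 + 1).factorial : ℝ)),
    fdb_coeff n g hg y _ ?_ m n le_rfl]
  · ring
  · intro k hk
    rw [Polynomial.coeff_add, Polynomial.finset_sum_coeff]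
    simp only [Polynomial.coeff_C_mul_X_pow, Polynomial.coeff_C]
    rcases k with _ | k
    · simp
    · rw [Finset.sum_eq_single (⟨k, hk⟩ : Fin n)]
      · simp
      · intro j _ hj
        rw [if_neg]
        intro h
        exact hj (Fin.ext (by simp; omega))
      · simp
end

section
/- Determinant form of Faà di Bruno's formula, general order: Let n ∈ ℕ, let f, g : ℝ → ℝ be (n+1)-times continuously differentiable, and let y ∈ ℝ. Define the (n+1)×(n+1) matrix M over the polynomial ring ℝ[T], with rows and columns indexed by 0, …, n, as follows: for each row r, the entry in column 0 is g^{(n+1−r)}(y)·T; for r ≥ 1 the entry in column r is the constant polynomial −1; the entries in columns c with 1 ≤ c < r are 0; and for every column c > r (c ≥ 1) the entry is C(n−r, c−r−1) · g^{(c−r)}(y) · T, where C denotes the binomial coefficient. Then evaluating the determinant of M by linearly replacing each monomial T^p with f^{(p)}(g(y)) — i.e., forming ∑_p (det M).coeff(p) · f^{(p)}(g(y)) — yields (−1)^n · (f ∘ g)^{(n+1)}(y). -/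
open Polynomial

/-- Bell-type polynomials attached to a sequence of derivatives. -/
noncomputable def bellP (a : ℕ → ℝ) : ℕ → ℝ[X]
  | 0 => 1
  | m + 1 => ∑ k : Fin (m + 1), C ((Nat.choose m k.1 : ℝ) * a (k.1 + 1)) * X * bellP a (m - k.1)
  termination_by m => m
  decreasing_by omega

theorem bellP_zero (a : ℕ → ℝ) : bellP a 0 = 1 := by rw [bellP]

theorem bellP_succ (a : ℕ → ℝ) (m : ℕ) : bellP a (m + 1) =
    ∑ k ∈ Finset.range (m + 1), C ((Nat.choose m k : ℝ) * a (k + 1)) * X * bellP a (m - k) := by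
  rw [bellP, ← Fin.sum_univ_eq_sum_range
    (fun k => C ((Nat.choose m k : ℝ) * a (k + 1)) * X * bellP a (m - k))]

/-- The evaluation functional. -/
noncomputable def umb (b : ℕ → ℝ) : ℝ[X] →ₗ[ℝ] ℝ :=
  Polynomial.lsum (fun p => LinearMap.mulRight ℝ (b p))

theorem umb_apply (b : ℕ → ℝ) (q : ℝ[X]) : umb b q = q.sum (fun p c => c * b p) := rfl

theorem umb_X_mul (b : ℕ → ℝ) (q : ℝ[X]) : umb b (X * q) = umb (fun p => b (p + 1)) q := by
  induction q using Polynomial.induction_on' with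
  | add p q hp hq => rw [mul_add, map_add, map_add, hp, hq]
  | monomial n c =>
    rw [X_mul_monomial, umb_apply, umb_apply, sum_monomial_index _ _ (by simp),
      sum_monomial_index _ _ (by simp)]

theorem umb_bell (g : ℝ → ℝ) (y : ℝ) (m : ℕ) : ∀ (f : ℝ → ℝ),
    ContDiff ℝ m f → ContDiff ℝ m g →
    umb (fun p => iteratedDeriv p f (g y)) (bellP (fun k => iteratedDeriv k g y) m) =
      iteratedDeriv m (f ∘ g) y := by
  induction m using Nat.strong_induction_on with
  | _ m ih =>
  intro f hf hg
  cases m with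
  | zero =>
    rw [bellP_zero, umb_apply, ← C_1, sum_C_index (by simp)]
    simp
  | succ m =>
    have hf' : ContDiff ℝ m (deriv f) := by
      have h : ContDiff ℝ ((m : WithTop ℕ∞) + 1) f := by exact_mod_cast hf
      exact (contDiff_succ_iff_deriv.1 h).2.2
    have hg' : ContDiff ℝ m (deriv g) := by
      have h : ContDiff ℝ ((m : WithTop ℕ∞) + 1) g := by exact_mod_cast hg
      exact (contDiff_succ_iff_deriv.1 h).2.2
    have hgm : ContDiff ℝ m g := hg.of_le (by exact_mod_cast Nat.le_succ m)
    have hfd : Differentiable ℝ f := hf.differentiable (by simp)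
    have hgd : Differentiable ℝ g := hg.differentiable (by simp)
    have hd : deriv (f ∘ g) = deriv g * (deriv f ∘ g) := by
      funext x
      rw [deriv_comp x (hfd _) (hgd _)]
      simp [mul_comm]
    rw [iteratedDeriv_succ', hd, iteratedDeriv_mul hg'.contDiffAt (hf'.comp hgm).contDiffAt,
      bellP_succ, map_sum]
    refine Finset.sum_congr rfl fun k hk => ?_
    rw [mul_assoc, ← smul_eq_C_mul, map_smul, umb_X_mul]
    simp only [iteratedDeriv_succ']
    have hle : ((m - k : ℕ) : WithTop ℕ∞) ≤ (m : WithTop ℕ∞) := by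
      exact_mod_cast Nat.sub_le m k
    have := ih (m - k) (by omega) (deriv f) (hf'.of_le hle) (hgm.of_le hle)
    rw [← this, smul_eq_mul]

theorem row_sum (a : ℕ → ℝ) (n r : ℕ) (hr : r ≤ n) :
    ∑ c ∈ Finset.range (n + 1),
      (if c = 0 then C (a (n + 1 - r)) * X
        else if c = r then -1
        else if c < r then 0
        else C ((Nat.choose (n - r) (c - r - 1) : ℝ) * a (c - r)) * X) *
      (if c = 0 then 1 else bellP a (n + 1 - c)) = if r = 0 then bellP a (n + 1) else 0 := by
  obtain ⟨d, rfl⟩ := Nat.exists_eq_add_of_le hr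
  rw [Finset.sum_range_succ', Finset.sum_range_add]
  have h2 : ∀ k ∈ Finset.range d,
      (if r + k + 1 = 0 then C (a (r + d + 1 - r)) * X
        else if r + k + 1 = r then -1
        else if r + k + 1 < r then 0
        else C ((Nat.choose (r + d - r) (r + k + 1 - r - 1) : ℝ) * a (r + k + 1 - r)) * X) *
      (if r + k + 1 = 0 then 1 else bellP a (r + d + 1 - (r + k + 1))) =
      C ((Nat.choose d k : ℝ) * a (k + 1)) * X * bellP a (d - k) := by
    intro k _
    rw [if_neg (by omega), if_neg (by omega), if_neg (by omega), if_neg (by omega)]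
    rw [show r + d - r = d by omega, show r + k + 1 - r - 1 = k by omega,
      show r + k + 1 - r = k + 1 by omega, show r + d + 1 - (r + k + 1) = d - k by omega]
  rw [Finset.sum_congr rfl h2]
  have h3 := bellP_succ a d
  rw [Finset.sum_range_succ, Nat.sub_self, bellP_zero, Nat.choose_self, Nat.cast_one, one_mul,
    mul_one] at h3
  rw [if_pos rfl, if_pos rfl, mul_one, show r + d + 1 - r = d + 1 by omega, add_assoc, ← h3]
  cases r with
  | zero => simp
  | succ s =>
    rw [Finset.sum_range_succ, Finset.sum_eq_zero]
    · rw [if_neg (by omega), if_pos rfl, if_neg (by omega), if_neg (by omega),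
        show s + 1 + d + 1 - (s + 1) = d + 1 by omega]
      ring
    · intro c hc
      have := Finset.mem_range.1 hc
      rw [if_neg (by omega), if_neg (by omega), if_pos (by omega), zero_mul]

theorem det_eq (a : ℕ → ℝ) (n : ℕ) :
    Matrix.det (Matrix.of fun r c : Fin (n + 1) =>
        if c.1 = 0 then C (a (n + 1 - r.1)) * X
        else if c.1 = r.1 then -1
        else if c.1 < r.1 then 0
        else C ((Nat.choose (n - r.1) (c.1 - r.1 - 1) : ℝ) * a (c.1 - r.1)) * X) =
      (-1) ^ n * bellP a (n + 1) := by
  set M : Matrix (Fin (n + 1)) (Fin (n + 1)) ℝ[X] := Matrix.of fun r c : Fin (n + 1) =>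
        if c.1 = 0 then C (a (n + 1 - r.1)) * X
        else if c.1 = r.1 then -1
        else if c.1 < r.1 then 0
        else C ((Nat.choose (n - r.1) (c.1 - r.1 - 1) : ℝ) * a (c.1 - r.1)) * X with hM
  let x : Fin (n + 1) → ℝ[X] := fun c => if c.1 = 0 then 1 else bellP a (n + 1 - c.1)
  have hx : M.mulVec x = fun r => if r.1 = 0 then bellP a (n + 1) else 0 := by
    funext r
    rw [← row_sum a n r.1 (by omega), ← Fin.sum_univ_eq_sum_range (fun c =>
      (if c = 0 then C (a (n + 1 - r.1)) * X
        else if c = r.1 then -1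
        else if c < r.1 then 0
        else C ((Nat.choose (n - r.1) (c - r.1 - 1) : ℝ) * a (c - r.1)) * X) *
      (if c = 0 then 1 else bellP a (n + 1 - c)))]
    rfl
  have h1 : Matrix.cramer M (M.mulVec x) 0 = M.det := by
    rw [Matrix.cramer_eq_adjugate_mulVec, Matrix.mulVec_mulVec, Matrix.adjugate_mul,
      Matrix.smul_mulVec, Matrix.one_mulVec]
    simp [x]
  rw [← h1, Matrix.cramer_apply, hx, Matrix.det_of_isUpperTriangular, Fin.prod_univ_succ]
  · rw [Matrix.updateCol_self, if_pos (by simp), mul_comm]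
    congr 1
    have hd : ∀ i : Fin n, (M.updateCol 0 (fun r => if r.1 = 0 then bellP a (n + 1) else 0))
        i.succ i.succ = -1 := by
      intro i
      rw [Matrix.updateCol_ne (Fin.succ_ne_zero i), hM, Matrix.of_apply, if_neg (by simp),
        if_pos rfl]
    rw [Finset.prod_congr rfl (fun i _ => hd i)]
    simp
  · intro i j hij
    have hij : j < i := hij
    have h0 : i.1 ≠ 0 := by have : j.1 < i.1 := hij; omega
    by_cases hj : j = 0
    · subst hj
      rw [Matrix.updateCol_self, if_neg h0]
    · have hj' : j.1 ≠ 0 := fun h => hj (Fin.ext h)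
      rw [Matrix.updateCol_ne hj, hM, Matrix.of_apply, if_neg hj', if_neg (by have : j.1 < i.1 := hij; omega),
        if_pos (Fin.lt_def.1 hij)]

/-- **Determinant form of Faà di Bruno's formula, general order.** For
`(n+1)`-times continuously differentiable `f g : ℝ → ℝ`, consider the
`(n+1)×(n+1)` matrix over `ℝ[T]` whose row `r` has entry `g^{(n+1-r)}(y)·T`
in column `0`, `-1` in column `r` (for `r ≥ 1`), `0` in columns `1 ≤ c < r`,
and `C(n-r, c-r-1)·g^{(c-r)}(y)·T` in columns `c > r`, `c ≥ 1`. Evaluating its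
determinant by replacing `T^p` with `f^{(p)}(g y)` yields
`(-1)^n · (f ∘ g)^{(n+1)}(y)`. -/
theorem faa_di_bruno_det (n : ℕ) (f g : ℝ → ℝ)
    (hf : ContDiff ℝ (n + 1) f) (hg : ContDiff ℝ (n + 1) g) (y : ℝ) :
    (Matrix.det (Matrix.of fun r c : Fin (n + 1) =>
        if c.1 = 0 then C (iteratedDeriv (n + 1 - r.1) g y) * X
        else if c.1 = r.1 then -1
        else if c.1 < r.1 then 0
        else C ((Nat.choose (n - r.1) (c.1 - r.1 - 1) : ℝ) *
            iteratedDeriv (c.1 - r.1) g y) * X)).sum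
        (fun p coeff => coeff * iteratedDeriv p f (g y)) =
      (-1 : ℝ) ^ n * iteratedDeriv (n + 1) (f ∘ g) y := by
  rw [det_eq (fun k => iteratedDeriv k g y) n]
  rw [← umb_apply (fun p => iteratedDeriv p f (g y)),
    show ((-1 : ℝ[X]) ^ n) = C ((-1 : ℝ) ^ n) by simp, ← smul_eq_C_mul, map_smul,
    umb_bell g y (n + 1) f (by exact_mod_cast hf) (by exact_mod_cast hg), smul_eq_mul]
end

section
/- Faà di Bruno's formula in the form stated with factorial normalization: Let f, g : ℝ → ℝ be n-times continuously differentiable and let x ∈ ℝ. Then (1/n!) · (f ∘ g)^{(n)}(x) equals the sum, over all tuples (m₁, …, mₙ) of non-negative integers satisfying m₁ + 2·m₂ + ⋯ + n·mₙ = n, of (1/p!) · f^{(p)}(g(x)) · (multinomial coefficient p! / (m₁!⋯mₙ!)) · ∏_{j=1}^{n} ( g^{(j)}(x) / j! )^{m_j}, where p = m₁ + ⋯ + mₙ; equivalently, the summand is f^{(p)}(g(x)) · ∏_{j=1}^{n} (1/m_j!) · ( g^{(j)}(x) / j! )^{m_j}. -/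
open Finset

theorem fdb_iteratedDeriv_poly (k : ℕ) (R : Polynomial ℝ) :
    iteratedDeriv k (fun t => R.eval t) = fun t => (Polynomial.derivative^[k] R).eval t := by
  induction k with
  | zero => simp
  | succ k ih =>
    rw [iteratedDeriv_succ, ih, Function.iterate_succ_apply']
    funext t
    exact Polynomial.deriv _

theorem fdb_iteratedDeriv_poly_zero (k : ℕ) (R : Polynomial ℝ) :
    iteratedDeriv k (fun t => R.eval t) 0 = k.factorial * R.coeff k := by
  rw [fdb_iteratedDeriv_poly]
  simp only [← Polynomial.coeff_zero_eq_eval_zero]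
  rw [Polynomial.coeff_iterate_derivative]
  simp [Nat.descFactorial_self]

/-- **Faà di Bruno's formula with factorial normalization.**
`(1/n!) (f ∘ g)^{(n)}(x)` equals the sum over tuples `(m₁, …, mₙ)` with
`∑ j·m_j = n` of `(1/p!) · f^{(p)}(g x) · (p!/(m₁!⋯mₙ!)) · ∏ (g^{(j)}(x)/j!)^{m_j}`
where `p = ∑ m_j` and `p!/(m₁!⋯mₙ!)` is the multinomial coefficient. -/
theorem faa_di_bruno_normalized (n : ℕ) (f g : ℝ → ℝ)
    (hf : ContDiff ℝ n f) (hg : ContDiff ℝ n g) (x : ℝ) :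
    (1 / (n.factorial : ℝ)) * iteratedDeriv n (f ∘ g) x =
      ∑ m ∈ (Fintype.piFinset fun _ : Fin n => Finset.range (n + 1)).filter
          (fun m : Fin n → ℕ => ∑ j : Fin n, (j.1 + 1) * m j = n),
        (1 / ((∑ j : Fin n, m j).factorial : ℝ)) *
          iteratedDeriv (∑ j : Fin n, m j) f (g x) *
          (Nat.multinomial Finset.univ m : ℝ) *
          ∏ j : Fin n,
            (iteratedDeriv (j.1 + 1) g x / ((j.1 + 1).factorial : ℝ)) ^ m j := by
  set a : ℕ → ℝ := fun p => (1 / (p.factorial : ℝ)) * iteratedDeriv p f (g x) with ha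
  set b : Fin n → ℝ := fun j => iteratedDeriv (j.1 + 1) g x / ((j.1 + 1).factorial : ℝ) with hb
  let P : Polynomial ℝ := ∑ p ∈ range (n + 1), Polynomial.monomial p (a p)
  let Q : Polynomial ℝ := ∑ j : Fin n, Polynomial.monomial (j.1 + 1) (b j)
  have hP : ∀ p ≤ n, iteratedDeriv p (fun t => P.eval t) 0 = iteratedDeriv p f (g x) := by
    intro p hp
    rw [fdb_iteratedDeriv_poly_zero]
    have : P.coeff p = a p := by
      simp only [P, Polynomial.finsetSum_coeff, Polynomial.coeff_monomial]
      rw [Finset.sum_ite_eq' (range (n+1)) p a, if_pos (by simp; omega)]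
    rw [this, ha]
    have := Nat.factorial_ne_zero p
    field_simp
  have hQ : ∀ k, 0 < k → k ≤ n → iteratedDeriv k (fun t => Q.eval t) 0 = iteratedDeriv k g x := by
    intro k hk hkn
    obtain ⟨k, rfl⟩ : ∃ l, k = l + 1 := ⟨k - 1, by omega⟩
    rw [fdb_iteratedDeriv_poly_zero]
    have : Q.coeff (k + 1) = b ⟨k, hkn⟩ := by
      simp only [Q, Polynomial.finsetSum_coeff, Polynomial.coeff_monomial]
      rw [Finset.sum_eq_single ⟨k, hkn⟩]
      · simp
      · intro j _ hj
        rw [if_neg]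
        intro h
        exact hj (Fin.ext (by simpa using h))
      · simp
    rw [this, hb]
    have := Nat.factorial_ne_zero (k + 1)
    field_simp
  have hQ0 : Q.eval 0 = 0 := by
    simp [Q, Polynomial.eval_finsetSum]
  have hkey : iteratedDeriv n (f ∘ g) x = n.factorial * (P.comp Q).coeff n := by
    rw [← fdb_iteratedDeriv_poly_zero]
    have hPc : ContDiff ℝ n (fun t => P.eval t) := by
      simpa using Polynomial.contDiff_aeval (𝕜 := ℝ) P n
    have hQc : ContDiff ℝ n (fun t => Q.eval t) := by
      simpa using Polynomial.contDiff_aeval (𝕜 := ℝ) Q n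
    have e : (fun t => (P.comp Q).eval t) = (fun t => P.eval t) ∘ (fun t => Q.eval t) := by
      funext t; simp
    rw [e, iteratedDeriv_scomp_eq_sum_orderedFinpartition (n := n) hf.contDiffAt hg.contDiffAt le_rfl,
      iteratedDeriv_scomp_eq_sum_orderedFinpartition (n := n)
        hPc.contDiffAt hQc.contDiffAt le_rfl]
    refine Finset.sum_congr rfl fun c _ => ?_
    simp only [hQ0]
    rw [hP _ c.length_le]
    congr 1
    refine Finset.prod_congr rfl fun j _ => ?_
    rw [hQ _ (c.partSize_pos j) (c.partSize_le j)]
  have hn := Nat.factorial_ne_zero n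
  have hcoeff : (P.comp Q).coeff n = ∑ p ∈ range (n + 1), ∑ m ∈ piAntidiag (univ : Finset (Fin n)) p,
      if ∑ j : Fin n, (j.1 + 1) * m j = n then
        a p * (Nat.multinomial Finset.univ m : ℝ) * ∏ j : Fin n, b j ^ m j else 0 := by
    have : P.comp Q = ∑ p ∈ range (n + 1), ∑ m ∈ piAntidiag (univ : Finset (Fin n)) p,
        Polynomial.monomial (∑ j : Fin n, (j.1 + 1) * m j)
          (a p * (Nat.multinomial Finset.univ m : ℝ) * ∏ j : Fin n, b j ^ m j) := by
      simp only [P, Polynomial.sum_comp, Polynomial.monomial_comp]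
      refine Finset.sum_congr rfl fun p _ => ?_
      simp only [Q, Finset.sum_pow_eq_sum_piAntidiag, Finset.mul_sum]
      refine Finset.sum_congr rfl fun m _ => ?_
      simp only [mul_pow, ← pow_mul, ← Polynomial.C_mul_X_pow_eq_monomial,
        Finset.prod_mul_distrib, Finset.prod_pow_eq_pow_sum, map_mul, map_prod, map_pow, map_natCast]
      ring
    rw [this]
    simp only [Polynomial.finsetSum_coeff, Polynomial.coeff_monomial]
  rw [hkey, ← mul_assoc, one_div_mul_cancel (by exact_mod_cast hn), one_mul, hcoeff]
  simp only [← Finset.sum_filter]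
  rw [Finset.sum_sigma']
  refine Finset.sum_bij' (fun s _ => s.2) (fun m _ => ⟨∑ j, m j, m⟩) ?_ ?_ ?_ ?_ ?_
  · rintro ⟨p, m⟩ h
    simp only [mem_sigma, mem_filter, mem_range, mem_piAntidiag, Fintype.mem_piFinset] at h ⊢
    refine ⟨fun j => ?_, h.2.2⟩
    have := Finset.single_le_sum (f := m) (fun _ _ => Nat.zero_le _) (Finset.mem_univ j)
    have h1 : ∑ j, m j = p := h.2.1.1
    have h2 : m j ≤ ∑ j, m j := this
    omega
  · intro m h
    simp only [mem_sigma, mem_filter, mem_range, mem_piAntidiag, Fintype.mem_piFinset] at h ⊢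
    refine ⟨?_, ⟨by simp, by simp⟩, h.2⟩
    have : ∑ j, m j ≤ ∑ j : Fin n, (j.1 + 1) * m j :=
      Finset.sum_le_sum fun j _ => Nat.le_mul_of_pos_left _ (Nat.succ_pos _)
    omega
  · rintro ⟨p, m⟩ h
    simp only [mem_sigma, mem_filter, mem_piAntidiag] at h
    obtain ⟨_, ⟨rfl, _⟩, _⟩ := h
    rfl
  · intro m h
    rfl
  · rintro ⟨p, m⟩ h
    simp only [mem_sigma, mem_filter, mem_piAntidiag] at h
    obtain ⟨_, ⟨rfl, _⟩, _⟩ := h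
    rfl
end
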